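/- Under the hypotheses of Theorem 2 (the system ẋ = f(x,z,θ,d), ż = Γ e^{-z}(V(x,z) − ε)⁺ with f locally Lipschitz, f(0,z,θ,0) = 0, V ∈ C¹ with V(0,z) = 0 and V(x,z) > 0 for x ≠ 0, bounded sublevel sets {(x,z) ∈ ℝⁿ × [−M,M] : V(x,z) ≤ M} for each M > 0, and the dissipation inequality (∂V/∂x)·f + Γ e^{-z}(∂V/∂z)(V − ε)⁺ ≤ −cV + a(|d|² + ((|θ| − b − λ(e^z))⁺)²)/(1 + κ(e^z)) for class-K∞ functions κ, λ and constants a,b,c > 0), if in addition the disturbances satisfy lim_{t→∞} d(t) = 0 and limsup_{t→∞} |θ(t)| ≤ b + λ(e^{lim_{t→∞} z(t)}), then the solution satisfies lim_{t→∞} |x(t)| = 0. -/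

import Mathlib

/-!
Write `W t = V (x t, z t)`. The function `W` is absolutely continuous and, by the chain rule and
the dissipation inequality, `W' ≤ -c W + a u` almost everywhere, where
`u = ‖d‖² + ((‖θ‖ - b - lam (exp z))⁺)²` (the factor `1 / (1 + κ (exp z))` is at most `1`).
`lyapunov_decay` integrates such an inequality by showing that `exp (c t) (W t - η / c)` is
non-increasing where `a u ≤ η`. By the limits of `d`, `z` and `‖θ‖`, the quantity `u` is
eventually (almost everywhere) smaller than any prescribed constant
(`deadzone_disturbance_small`), so `W → 0`. As `z` converges, the trajectory eventually lies in a
compact sublevel set of `V`, on which `V` is bounded below by a positive constant away from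
`x = 0`; hence `x → 0` (`tendsto_norm_of_tendsto_lyapunov`).

The integral equation for `z` does not by itself say that its integrand is integrable, and the
Bochner integral is `0` when it is not. `intervalIntegrable_of_primitive` excludes this: up to the
supremum `T` of the times of integrability the decay estimate bounds `W`, hence the integrand,
and after `T` the function `z` would be constant and the integrand continuous, so integrability
would persist beyond `T`.
-/

open Set Filter MeasureTheory Topology
open scoped ENNReal

noncomputable section

/-- A function of class `K∞`: continuous, increasing, vanishing at `0`, unbounded. -/
def ClassKInf (κ : ℝ → ℝ) : Prop :=
  ContinuousOn κ (Set.Ici 0) ∧ StrictMonoOn κ (Set.Ici 0) ∧ κ 0 = 0 ∧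
    Filter.Tendsto κ Filter.atTop Filter.atTop

/-- Absolute continuity passes to any function whose increments are dominated by those of an
absolutely continuous one; this reduces vector-valued primitives to the real-valued `∫ ‖G‖`. -/
lemma AbsolutelyContinuousOnInterval.of_dist_le {X Y : Type*} [PseudoMetricSpace X]
    [PseudoMetricSpace Y] {W : ℝ → X} {P : ℝ → Y} {a b K : ℝ}
    (hP : AbsolutelyContinuousOnInterval P a b)
    (h : ∀ s ∈ uIcc a b, ∀ t ∈ uIcc a b, dist (W s) (W t) ≤ K * dist (P s) (P t)) :
    AbsolutelyContinuousOnInterval W a b := by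
  have h0 := Tendsto.const_mul K hP
  rw [mul_zero] at h0
  refine squeeze_zero' (Eventually.of_forall fun E => Finset.sum_nonneg fun _ _ => dist_nonneg)
    ?_ h0
  filter_upwards [mem_inf_of_right (mem_principal_self _)] with E hE
  rw [Finset.mul_sum]
  exact Finset.sum_le_sum fun i hi => h _ (hE.1 i hi).1 _ (hE.1 i hi).2

lemma AbsolutelyContinuousOnInterval.le_of_deriv_nonpos {Y : ℝ → ℝ} {s t : ℝ} (hst : s ≤ t)
    (hY : AbsolutelyContinuousOnInterval Y s t)
    (h : ∀ᵐ r, r ∈ Ioc s t → deriv Y r ≤ 0) : Y t ≤ Y s := by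
  have h1 : ∫ r in s..t, deriv Y r ≤ 0 := by
    rw [intervalIntegral.integral_of_le hst]
    exact setIntegral_nonpos_ae measurableSet_Ioc h
  rw [hY.integral_deriv_eq_sub] at h1
  linarith

lemma continuousOn_of_eq_primitive {E : Type*} [NormedAddCommGroup E]
    [NormedSpace ℝ E] {q G : ℝ → E} {q₀ : E} {T : ℝ} (hT : 0 ≤ T)
    (hG : IntervalIntegrable G volume 0 T)
    (hq : ∀ t ∈ Icc 0 T, q t = q₀ + ∫ r in (0:ℝ)..t, G r) : ContinuousOn q (Icc 0 T) := by
  have h1 := intervalIntegral.continuousOn_primitive_interval' hG left_mem_uIcc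
  rw [uIcc_of_le hT] at h1
  exact (continuousOn_const.add h1).congr hq

lemma absolutelyContinuous_comp_primitive {E : Type*} [NormedAddCommGroup E]
    [NormedSpace ℝ E] [CompleteSpace E] {V : E → ℝ} (hV : ContDiff ℝ 1 V)
    {q G : ℝ → E} {q₀ : E} {T : ℝ} (hT : 0 ≤ T)
    (hG : IntervalIntegrable G volume 0 T)
    (hq : ∀ t ∈ Icc 0 T, q t = q₀ + ∫ r in (0:ℝ)..t, G r) :
    AbsolutelyContinuousOnInterval (fun t => V (q t)) 0 T := by
  have hqc := continuousOn_of_eq_primitive hT hG hq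
  obtain ⟨K, hK⟩ := LocallyLipschitzOn.exists_lipschitzOnWith_of_compact
    (isCompact_Icc.image_of_continuousOn hqc)
    (hV.locallyLipschitz.locallyLipschitzOn (s := q '' Icc 0 T))
  have hP := hG.norm.absolutelyContinuousOnInterval_intervalIntegral (c := 0) left_mem_uIcc
  refine AbsolutelyContinuousOnInterval.of_dist_le (K := K) hP ?_
  rw [uIcc_of_le hT]
  intro s hs t ht
  refine (hK.dist_le_mul _ (mem_image_of_mem q hs) _ (mem_image_of_mem q ht)).trans ?_
  gcongr
  have hi : ∀ r ∈ Icc 0 T, IntervalIntegrable G volume 0 r := fun r hr =>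
    hG.mono_set (by rw [uIcc_of_le hT, uIcc_of_le hr.1]; exact Icc_subset_Icc_right hr.2)
  rw [hq s hs, hq t ht, dist_add_left, dist_eq_norm, Real.dist_eq,
    intervalIntegral.integral_interval_sub_left (hi s hs) (hi t ht),
    intervalIntegral.integral_interval_sub_left (hi s hs).norm (hi t ht).norm]
  exact intervalIntegral.norm_integral_le_abs_integral_norm

lemma ae_hasDerivAt_comp_primitive {E : Type*} [NormedAddCommGroup E]
    [NormedSpace ℝ E] [CompleteSpace E] {V : E → ℝ} (hV : ContDiff ℝ 1 V)
    {q G : ℝ → E} {q₀ : E} {T : ℝ} (hT : 0 ≤ T)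
    (hG : IntervalIntegrable G volume 0 T)
    (hq : ∀ t ∈ Icc 0 T, q t = q₀ + ∫ r in (0:ℝ)..t, G r) :
    ∀ᵐ r, r ∈ Ioo 0 T → HasDerivAt (fun t => V (q t)) (fderiv ℝ V (q r) (G r)) r := by
  filter_upwards [hG.ae_hasDerivAt_integral] with r hr hrT
  have hr' : r ∈ uIcc 0 T := by rw [uIcc_of_le hT]; exact Ioo_subset_Icc_self hrT
  have h1 : HasDerivAt q (G r) r := by
    refine ((hr hr' 0 left_mem_uIcc).const_add q₀).congr_of_eventuallyEq ?_
    filter_upwards [Ioo_mem_nhds hrT.1 hrT.2] with t ht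
    exact hq t (Ioo_subset_Icc_self ht)
  exact ((hV.differentiable one_ne_zero) (q r)).hasFDerivAt.comp_hasDerivAt r h1

/-- Comparison estimate: if `q` is a primitive of `G` and `(V ∘ q)' ≤ -c (V ∘ q) + η` almost
everywhere from time `s` on, then `V ∘ q - η / c` decays at least like `exp (-c t)` from `s` to `T`. -/
lemma lyapunov_decay {E : Type*} [NormedAddCommGroup E]
    [NormedSpace ℝ E] [CompleteSpace E] {V : E → ℝ} (hV : ContDiff ℝ 1 V)
    {q G : ℝ → E} {q₀ : E} {s T : ℝ} (hs : 0 ≤ s) (hsT : s ≤ T)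
    (hG : IntervalIntegrable G volume 0 T)
    (hq : ∀ t ∈ Icc 0 T, q t = q₀ + ∫ r in (0:ℝ)..t, G r) {c η : ℝ} (hc : 0 < c)
    (hae : ∀ᵐ r, s ≤ r → fderiv ℝ V (q r) (G r) ≤ -c * V (q r) + η) :
    V (q T) ≤ η / c + Real.exp (-c * (T - s)) * (V (q s) - η / c) := by
  have hT := hs.trans hsT
  have hWac : AbsolutelyContinuousOnInterval (fun t => V (q t)) s T :=
    (absolutelyContinuous_comp_primitive hV hT hG hq).mono (by
      rw [uIcc_of_le hT, uIcc_of_le hsT]; exact Icc_subset_Icc_left hs)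
  have hconst : AbsolutelyContinuousOnInterval (fun _ : ℝ => η / c) s T :=
    contDiff_const.contDiffOn.absolutelyContinuousOnInterval
  have hexp : AbsolutelyContinuousOnInterval (fun t : ℝ => Real.exp (c * t)) s T :=
    (Real.contDiff_exp.comp
      (contDiff_const.mul contDiff_id)).contDiffOn.absolutelyContinuousOnInterval
  have hY := hexp.fun_mul (hWac.fun_sub hconst)
  have key := hY.le_of_deriv_nonpos hsT (by
    filter_upwards [ae_hasDerivAt_comp_primitive hV hT hG hq, hae,
      Measure.ae_ne volume T] with r h1 h2 h3 hr
    have h4 := h1 ⟨hs.trans_lt hr.1, lt_of_le_of_ne hr.2 h3⟩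
    have h5 : HasDerivAt (fun t : ℝ => Real.exp (c * t)) (Real.exp (c * r) * c) r := by
      simpa using ((hasDerivAt_id r).const_mul c).exp
    rw [(h5.fun_mul (h4.sub_const (η / c))).deriv]
    have h6 := h2 hr.1.le
    have h7 : c * (η / c) = η := by field_simp
    have : Real.exp (c * r) * c * (V (q r) - η / c) + Real.exp (c * r) * fderiv ℝ V (q r) (G r)
      = Real.exp (c * r) * (fderiv ℝ V (q r) (G r) + c * V (q r) - c * (η / c)) := by ring
    rw [this, h7]
    exact mul_nonpos_of_nonneg_of_nonpos (Real.exp_pos _).le (by linarith))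
  have h8 : Real.exp (-c * (T - s)) = Real.exp (c * s) / Real.exp (c * T) := by
    rw [← Real.exp_sub]; ring_nf
  have h9 : V (q T) - η / c ≤ Real.exp (-c * (T - s)) * (V (q s) - η / c) := by
    rw [h8, div_mul_eq_mul_div, le_div_iff₀ (Real.exp_pos _)]
    linarith
  linarith

/-- If `z` satisfies `z t = z₀ + ∫ Φ (x, z)` with `Φ ≥ 0` and the integrand is bounded by `B` at every
time up to which it is integrable, then it is integrable up to every time. Only the convention that a
non-integrable function has integral `0` makes this a statement to be proved. -/
lemma intervalIntegrable_of_primitive {F : Type*} [TopologicalSpace F]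
    {x : ℝ → F} {z : ℝ → ℝ} {z₀ B : ℝ} {Φ : F × ℝ → ℝ}
    (hΦ : Continuous Φ) (hΦ0 : ∀ q, 0 ≤ Φ q) (hx : ContinuousOn x (Ici 0))
    (hz : ∀ t, 0 ≤ t → z t = z₀ + ∫ s in (0:ℝ)..t, Φ (x s, z s))
    (hB : ∀ t, 0 ≤ t → IntervalIntegrable (fun s => Φ (x s, z s)) volume 0 t →
      Φ (x t, z t) ≤ B) {t : ℝ} (ht : 0 ≤ t) :
    IntervalIntegrable (fun s => Φ (x s, z s)) volume 0 t := by
  set g : ℝ → ℝ := fun s => Φ (x s, z s) with hg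
  by_contra hcon
  set S : Set ℝ := {r | 0 ≤ r ∧ IntervalIntegrable g volume 0 r} with hS
  have hdown : ∀ {r u : ℝ}, 0 ≤ r → r ≤ u → IntervalIntegrable g volume 0 u →
      IntervalIntegrable g volume 0 r := fun {r u} h0 h1 h2 =>
    h2.mono_set (by
      rw [uIcc_of_le h0, uIcc_of_le (h0.trans h1)]; exact Icc_subset_Icc_right h1)
  have hbdd : BddAbove S := ⟨t, fun r hr => by
    by_contra hlt
    exact hcon (hdown ht (not_le.1 hlt).le hr.2)⟩
  have h0S : (0:ℝ) ∈ S := ⟨le_rfl, IntervalIntegrable.refl⟩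
  set T := sSup S with hT
  have hT0 : 0 ≤ T := le_csSup hbdd h0S
  have hbelow : ∀ r, 0 ≤ r → r < T → IntervalIntegrable g volume 0 r := by
    intro r hr0 hr
    obtain ⟨u, hu, hru⟩ := exists_lt_of_lt_csSup ⟨0, h0S⟩ hr
    exact hdown hr0 hru.le hu.2
  -- beyond `T` the integral is undefined, hence `0` by convention
  have habove : ∀ r, T < r → z r = z₀ := by
    intro r hr
    have h1 : ¬ IntervalIntegrable g volume 0 r := fun h =>
      not_le.2 hr (le_csSup hbdd ⟨hT0.trans hr.le, h⟩)
    rw [hz r (hT0.trans hr.le), intervalIntegral.integral_undef h1, add_zero]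
  have hzc : ContinuousOn z (Ioo 0 T) := by
    intro r hr
    obtain ⟨u, hru, huT⟩ := exists_between hr.2
    have hu0 : 0 ≤ u := (hr.1.trans hru).le
    have h1 := continuousOn_of_eq_primitive hu0 (hbelow u hu0 huT)
      (q := z) (q₀ := z₀) (fun s hs => hz s hs.1)
    exact (h1.continuousAt (Icc_mem_nhds hr.1 hru)).continuousWithinAt
  have hgc : ContinuousOn g (Ioo 0 T) :=
    hΦ.comp_continuousOn ((hx.mono fun r hr => hr.1.le).prodMk hzc)
  have hI1 : IntegrableOn g (Ioo 0 T) volume := by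
    refine IntegrableOn.of_bound (by simp) (hgc.aestronglyMeasurable measurableSet_Ioo) B ?_
    filter_upwards [ae_restrict_mem measurableSet_Ioo] with r hr
    rw [Real.norm_of_nonneg (hΦ0 _)]
    exact hB r hr.1.le (hbelow r hr.1.le hr.2)
  have hI1' : IntervalIntegrable g volume 0 T := by
    rw [intervalIntegrable_iff_integrableOn_Ioo_of_le hT0]; exact hI1
  have hI2 : IntervalIntegrable g volume T (T + 1) := by
    have h1 : IntervalIntegrable (fun s => Φ (x s, z₀)) volume T (T + 1) := by
      refine ContinuousOn.intervalIntegrable ?_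
      rw [uIcc_of_le (by linarith)]
      exact hΦ.comp_continuousOn
        ((hx.mono fun r hr => hT0.trans hr.1).prodMk continuousOn_const)
    refine h1.congr_ae ?_
    filter_upwards [ae_restrict_mem measurableSet_uIoc] with r hr
    rw [uIoc_of_le (by linarith)] at hr
    simp only [hg, habove r hr.1]
  have : T + 1 ≤ T := le_csSup hbdd ⟨by linarith, hI1'.trans hI2⟩
  linarith

lemma ae_bound_of_eLpNorm_top {E : Type*} [NormedAddCommGroup E] {d : ℝ → E}
    (h : eLpNorm d ⊤ (volume.restrict (Ici (0:ℝ))) < ⊤) :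
    ∃ C : ℝ, 0 ≤ C ∧ ∀ᵐ t, 0 ≤ t → ‖d t‖ ≤ C := by
  refine ⟨(eLpNorm d ⊤ (volume.restrict (Ici (0:ℝ)))).toReal, ENNReal.toReal_nonneg, ?_⟩
  have h1 := (ae_restrict_iff' measurableSet_Ici).1
    (ae_le_eLpNormEssSup (f := d) (μ := volume.restrict (Ici (0:ℝ))))
  filter_upwards [h1] with t ht h0
  rw [eLpNorm_exponent_top] at h ⊢
  have := ENNReal.toReal_mono h.ne (ht h0)
  simpa using this

/-- A property holds eventually along `atTop ⊓ ae volume` iff it holds almost everywhere on some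
half-line. -/
lemma eventually_inf_ae {P : ℝ → Prop} :
    (∀ᶠ t in atTop ⊓ ae volume, P t) ↔ ∃ T : ℝ, ∀ᵐ t, T ≤ t → P t := by
  constructor
  · intro h
    obtain ⟨u, hu, v, hv, huv⟩ := eventually_inf.1 h
    obtain ⟨T, hT⟩ := mem_atTop_sets.1 hu
    refine ⟨T, ?_⟩
    filter_upwards [hv] with t ht hTt
    exact huv t ⟨hT t hTt, ht⟩
  · rintro ⟨T, hT⟩
    filter_upwards [mem_inf_of_left (Ici_mem_atTop T), mem_inf_of_right hT] with t h1 h2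
    exact h2 h1

/-- If `V → 0` along a trajectory with convergent `z`, then `x → 0`: the part of a compact sublevel set
of `V` where `‖x‖ ≥ r` carries a positive minimum of `V`. -/
lemma tendsto_norm_of_tendsto_lyapunov {E : Type*} [NormedAddCommGroup E] [ProperSpace E]
    {V : E × ℝ → ℝ} (hV : Continuous V) (hVpos : ∀ (x : E) (z : ℝ), x ≠ 0 → 0 < V (x, z))
    (hbdd : ∀ M : ℝ, 0 < M → Bornology.IsBounded {q : E × ℝ | q.2 ∈ Icc (-M) M ∧ V q ≤ M})
    {x : ℝ → E} {z : ℝ → ℝ} {zl : ℝ} (hz : Tendsto z atTop (𝓝 zl))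
    (hW : Tendsto (fun t => V (x t, z t)) atTop (𝓝 0)) :
    Tendsto (fun t => ‖x t‖) atTop (𝓝 0) := by
  -- eventually `|z| ≤ M` and `V ≤ M`
  set M := |zl| + 1 with hM
  have hM0 : 0 < M := by positivity
  have hzM : ∀ᶠ t in atTop, z t ∈ Icc (-M) M := by
    refine hz.eventually (Icc_mem_nhds ?_ ?_)
    · linarith [neg_abs_le zl]
    · linarith [le_abs_self zl]
  refine tendsto_order.2 ⟨fun r hr => Eventually.of_forall fun t => hr.trans_le (norm_nonneg _),
    fun r hr => ?_⟩
  have hclosed : IsClosed ({q : E × ℝ | q.2 ∈ Icc (-M) M ∧ V q ≤ M} ∩ {q | r ≤ ‖q.1‖}) :=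
    ((isClosed_Icc.preimage continuous_snd).inter (isClosed_le hV continuous_const)).inter
      (isClosed_le continuous_const continuous_fst.norm)
  have hcomp := Metric.isCompact_of_isClosed_isBounded hclosed
    ((hbdd M hM0).subset inter_subset_left)
  obtain ⟨m, hm0, hm⟩ := hcomp.exists_forall_le' (f := V) hV.continuousOn (a := 0) (by
    rintro ⟨y, w⟩ ⟨-, hy⟩
    refine hVpos y w fun h => ?_
    rw [mem_ofPred_eq, h, norm_zero] at hy
    exact hr.not_ge hy)
  filter_upwards [hzM, hW.eventually (gt_mem_nhds hm0), hW.eventually (gt_mem_nhds hM0)]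
    with t h1 h2 h3
  by_contra hcon
  exact h2.not_ge (hm (x t, z t) ⟨⟨h1, h3.le⟩, not_lt.1 hcon⟩)

lemma ClassKInf.nonneg {κ : ℝ → ℝ} (h : ClassKInf κ) {s : ℝ} (hs : 0 ≤ s) : 0 ≤ κ s := by
  have := h.2.1.monotoneOn (mem_Ici.2 le_rfl) (mem_Ici.2 hs) hs
  rwa [h.2.2.1] at this

/-- The disturbance term in the dissipation inequality is essentially arbitrarily small at infinity.
The essential bound on `θ` makes the real-valued `limsup` meaningful. -/
lemma deadzone_disturbance_small {E F : Type*} [NormedAddCommGroup E] [NormedAddCommGroup F]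
    {lam : ℝ → ℝ} (hlam : ClassKInf lam) {b : ℝ} {d : ℝ → E} {θ : ℝ → F} {z : ℝ → ℝ} {zl : ℝ}
    (hθbdd : ∃ C : ℝ, 0 ≤ C ∧ ∀ᵐ t, 0 ≤ t → ‖θ t‖ ≤ C)
    (hzl : Tendsto z atTop (𝓝 zl)) (hd0 : Tendsto d atTop (𝓝 0))
    (hθlim : limsup (fun t => ‖θ t‖) (atTop ⊓ ae volume) ≤ b + lam (Real.exp zl))
    {η : ℝ} (hη : 0 < η) :
    ∃ s : ℝ, 0 ≤ s ∧ ∀ᵐ t, s ≤ t →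
      ‖d t‖ ^ 2 + (max (‖θ t‖ - b - lam (Real.exp (z t))) 0) ^ 2 ≤ η := by
  obtain ⟨C, -, hC⟩ := hθbdd
  -- both squares are at most `ρ ^ 2 = η / 2`
  set ρ := Real.sqrt (η / 2) with hρ
  have hρ0 : 0 < ρ := Real.sqrt_pos.2 (by positivity)
  have hρ2 : ρ ^ 2 = η / 2 := Real.sq_sqrt (by positivity)
  have hbd : IsBoundedUnder (· ≤ ·) (atTop ⊓ ae volume) (fun t => ‖θ t‖) :=
    ⟨C, eventually_map.2 (eventually_inf_ae.2 ⟨0, hC⟩)⟩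
  have h1 : ∀ᶠ t in atTop ⊓ ae volume, ‖θ t‖ < b + lam (Real.exp zl) + ρ / 2 :=
    eventually_lt_of_limsup_lt (by linarith) hbd
  have hlc : Tendsto (fun t => lam (Real.exp (z t))) atTop (𝓝 (lam (Real.exp zl))) :=
    ((hlam.1.continuousAt (Ici_mem_nhds (Real.exp_pos zl))).tendsto.comp
      ((Real.continuous_exp.tendsto zl).comp hzl))
  have h2 : ∀ᶠ t in atTop, lam (Real.exp zl) - ρ / 2 < lam (Real.exp (z t)) :=
    hlc.eventually (lt_mem_nhds (by linarith))
  have h3 : ∀ᶠ t in atTop, ‖d t‖ < ρ := by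
    have := hd0.norm
    rw [norm_zero] at this
    exact this.eventually (gt_mem_nhds hρ0)
  have h4 : ∀ᶠ t in atTop ⊓ ae volume,
      ‖d t‖ ^ 2 + (max (‖θ t‖ - b - lam (Real.exp (z t))) 0) ^ 2 ≤ η := by
    filter_upwards [h1, h2.filter_mono inf_le_left, h3.filter_mono inf_le_left] with t h1 h2 h3
    have h5 : max (‖θ t‖ - b - lam (Real.exp (z t))) 0 ≤ ρ := max_le (by linarith) hρ0.le
    have h6 := pow_le_pow_left₀ (norm_nonneg _) h3.le 2
    have h7 := pow_le_pow_left₀ (le_max_right _ _) h5 2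
    linarith
  obtain ⟨T, hT⟩ := eventually_inf_ae.1 h4
  refine ⟨max T 0, le_max_right _ _, ?_⟩
  filter_upwards [hT] with t ht h0
  exact ht ((le_max_left _ _).trans h0)

/-- Remark after Theorem 2: under the hypotheses of Theorem 2, if moreover
`d(t) → 0` and `limsup_{t→∞}|θ(t)| ≤ b + λ(e^{lim z(t)})`, then `|x(t)| → 0`. -/
theorem deadzone_attractivity (n p l : ℕ)
    (Θ : Set (EuclideanSpace ℝ (Fin p))) (D : Set (EuclideanSpace ℝ (Fin l)))
    (hΘ : Θ.Nonempty) (hD : D.Nonempty)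
    (f : EuclideanSpace ℝ (Fin n) → ℝ → EuclideanSpace ℝ (Fin p) →
        EuclideanSpace ℝ (Fin l) → EuclideanSpace ℝ (Fin n))
    (Γ ε : ℝ) (hΓ : 0 < Γ) (hε : 0 < ε)
    (hf : LocallyLipschitz fun q : (EuclideanSpace ℝ (Fin n) × ℝ) ×
        (EuclideanSpace ℝ (Fin p) × EuclideanSpace ℝ (Fin l)) =>
        f q.1.1 q.1.2 q.2.1 q.2.2)
    (hf0 : ∀ (z : ℝ) (θ : EuclideanSpace ℝ (Fin p)), θ ∈ Θ → f 0 z θ 0 = 0)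
    (V : EuclideanSpace ℝ (Fin n) × ℝ → ℝ)
    (hV : ContDiff ℝ 1 V) (hV0 : ∀ z : ℝ, V (0, z) = 0)
    (hVpos : ∀ (x : EuclideanSpace ℝ (Fin n)) (z : ℝ), x ≠ 0 → 0 < V (x, z))
    (hbdd : ∀ M : ℝ, 0 < M → Bornology.IsBounded
        {q : EuclideanSpace ℝ (Fin n) × ℝ | q.2 ∈ Icc (-M) M ∧ V q ≤ M})
    (κ lam : ℝ → ℝ) (hκ : ClassKInf κ) (hlam : ClassKInf lam)
    (a b c : ℝ) (ha : 0 < a) (hb : 0 < b) (hc : 0 < c)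
    (hdiss : ∀ (x : EuclideanSpace ℝ (Fin n)) (z : ℝ) (θ : EuclideanSpace ℝ (Fin p))
        (d : EuclideanSpace ℝ (Fin l)), θ ∈ Θ → d ∈ D →
      fderiv ℝ V (x, z) (f x z θ d, Γ * Real.exp (-z) * max (V (x, z) - ε) 0)
        ≤ -c * V (x, z) +
          a * (‖d‖^2 + (max (‖θ‖ - b - lam (Real.exp z)) 0)^2) / (1 + κ (Real.exp z)))
    -- the disturbances
    (d : ℝ → EuclideanSpace ℝ (Fin l)) (θ : ℝ → EuclideanSpace ℝ (Fin p))
    (hdm : Measurable d) (hθm : Measurable θ)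
    (hdD : ∀ t, d t ∈ D) (hθΘ : ∀ t, θ t ∈ Θ)
    (hdbdd : eLpNorm d ⊤ (volume.restrict (Set.Ici (0:ℝ))) < ⊤)
    (hθbdd : eLpNorm θ ⊤ (volume.restrict (Set.Ici (0:ℝ))) < ⊤)
    -- the solution of the closed-loop system
    (x₀ : EuclideanSpace ℝ (Fin n)) (z₀ : ℝ)
    (x : ℝ → EuclideanSpace ℝ (Fin n)) (z : ℝ → ℝ)
    (hx0 : x 0 = x₀) (hz0 : z 0 = z₀)
    (hsol : ∀ t, 0 ≤ t →
      IntervalIntegrable (fun s => f (x s) (z s) (θ s) (d s)) volume 0 t ∧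
      x t = x₀ + ∫ s in (0:ℝ)..t, f (x s) (z s) (θ s) (d s) ∧
      z t = z₀ + ∫ s in (0:ℝ)..t,
        Γ * Real.exp (-(z s)) * max (V (x s, z s) - ε) 0)
    -- the limit of z (which exists: z is non-decreasing and bounded)
    (zl : ℝ) (hzl : Tendsto z atTop (𝓝 zl))
    -- the additional decay conditions on the disturbances
    (hd0 : Tendsto d atTop (𝓝 0))
    (hθlim : limsup (fun t => ‖θ t‖) (atTop ⊓ ae volume) ≤ b + lam (Real.exp zl)) :
    Tendsto (fun t => ‖x t‖) atTop (𝓝 0) := by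
  have hVnn : ∀ q, 0 ≤ V q := by
    rintro ⟨y, w⟩
    by_cases hy : y = 0
    · rw [hy, hV0]
    · exact (hVpos y w hy).le
  set q : ℝ → EuclideanSpace ℝ (Fin n) × ℝ := fun t => (x t, z t) with hq
  set Φ : EuclideanSpace ℝ (Fin n) × ℝ → ℝ :=
    fun q => Γ * Real.exp (-q.2) * max (V q - ε) 0 with hΦ
  have hΦc : Continuous Φ := by
    have := hV.continuous
    fun_prop
  have hΦ0 : ∀ q, 0 ≤ Φ q := fun q => by positivity
  set G : ℝ → EuclideanSpace ℝ (Fin n) × ℝ :=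
    fun s => (f (x s) (z s) (θ s) (d s), Φ (q s)) with hG
  have hxc : ContinuousOn x (Ici 0) := by
    intro t ht
    have h1 := continuousOn_of_eq_primitive (T := t + 1) (add_nonneg ht zero_le_one)
      (hsol _ (add_nonneg ht zero_le_one)).1 (q := x) (q₀ := x₀) (fun s hs => (hsol s hs.1).2.1)
    refine (h1 t ⟨ht, by linarith⟩).mono_of_mem_nhdsWithin ?_
    rw [← Ici_inter_Iic]
    exact inter_mem self_mem_nhdsWithin (mem_nhdsWithin_of_mem_nhds (Iic_mem_nhds (by linarith)))
  have hpair : ∀ T, 0 ≤ T → IntervalIntegrable (fun s => Φ (q s)) volume 0 T →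
      IntervalIntegrable G volume 0 T ∧
      ∀ t ∈ Icc 0 T, q t = (x₀, z₀) + ∫ r in (0:ℝ)..t, G r := by
    intro T hT hg
    have hGi : IntervalIntegrable G volume 0 T :=
      ⟨(hsol T hT).1.1.prodMk hg.1, (hsol T hT).1.2.prodMk hg.2⟩
    refine ⟨hGi, fun t ht => ?_⟩
    have hGt : IntervalIntegrable G volume 0 t :=
      hGi.mono_set (by rw [uIcc_of_le hT, uIcc_of_le ht.1]; exact Icc_subset_Icc_right ht.2)
    have h1 := (ContinuousLinearMap.fst ℝ (EuclideanSpace ℝ (Fin n)) ℝ).intervalIntegral_comp_comm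
      hGt
    have h2 := (ContinuousLinearMap.snd ℝ (EuclideanSpace ℝ (Fin n)) ℝ).intervalIntegral_comp_comm
      hGt
    simp only [ContinuousLinearMap.coe_fst', ContinuousLinearMap.coe_snd'] at h1 h2
    refine Prod.ext ?_ ?_
    · rw [Prod.fst_add, ← h1]
      exact (hsol t ht.1).2.1
    · rw [Prod.snd_add, ← h2]
      exact (hsol t ht.1).2.2
  -- since `κ ≥ 0`, the damping denominator is at least `1` and may be dropped
  have hdis : ∀ t, fderiv ℝ V (q t) (G t) ≤ -c * V (q t) +
      a * (‖d t‖ ^ 2 + (max (‖θ t‖ - b - lam (Real.exp (z t))) 0) ^ 2) := by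
    intro t
    refine (hdiss (x t) (z t) (θ t) (d t) (hθΘ t) (hdD t)).trans ?_
    gcongr
    exact div_le_self (by positivity) (by linarith [hκ.nonneg (Real.exp_pos (z t)).le])
  obtain ⟨Cd, hCd0, hCd⟩ := ae_bound_of_eLpNorm_top hdbdd
  have hθb := ae_bound_of_eLpNorm_top hθbdd
  obtain ⟨Cθ, hCθ0, hCθ⟩ := id hθb
  set C := a * (Cd ^ 2 + Cθ ^ 2) with hC
  have hdisC : ∀ᵐ t, 0 ≤ t → fderiv ℝ V (q t) (G t) ≤ -c * V (q t) + C := by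
    filter_upwards [hCd, hCθ] with t h1 h2 ht
    refine (hdis t).trans ?_
    have h3 : max (‖θ t‖ - b - lam (Real.exp (z t))) 0 ≤ Cθ :=
      max_le (by linarith [h2 ht, hlam.nonneg (Real.exp_pos (z t)).le]) hCθ0
    have h4 := h1 ht
    rw [hC]
    gcongr
  -- `B` below combines `V (q T) ≤ C / c + V (q 0)` with `z₀ ≤ z T`
  have hint : ∀ t, 0 ≤ t → IntervalIntegrable (fun s => Φ (q s)) volume 0 t := by
    intro t ht
    refine intervalIntegrable_of_primitive (z₀ := z₀)
      (B := Γ * Real.exp (-z₀) * max (C / c + V (q 0) - ε) 0) hΦc hΦ0 hxc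
      (fun t ht => (hsol t ht).2.2) (fun T hT hg => ?_) ht
    obtain ⟨hGi, hqT⟩ := hpair T hT hg
    have h1 := lyapunov_decay hV le_rfl hT hGi hqT hc hdisC
    have h2 : Real.exp (-c * (T - 0)) ≤ 1 := Real.exp_le_one_iff.2 (by nlinarith)
    have h3 : 0 ≤ C / c := by positivity
    have h4 : V (q T) ≤ C / c + V (q 0) := by
      nlinarith [Real.exp_pos (-c * (T - 0)), hVnn (q 0)]
    have h5 : z₀ ≤ z T := by
      rw [(hsol T hT).2.2]
      exact le_add_of_nonneg_right (intervalIntegral.integral_nonneg hT fun s _ => hΦ0 (q s))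
    simp only [hΦ]
    gcongr
  have hW : Tendsto (fun t => V (x t, z t)) atTop (𝓝 0) := by
    refine tendsto_order.2 ⟨fun r hr => Eventually.of_forall fun t => hr.trans_le (hVnn _),
      fun r hr => ?_⟩
    -- with `a u ≤ c r / 2` the comparison estimate has limit `r / 2 < r`
    obtain ⟨s, hs0, hs⟩ := deadzone_disturbance_small (η := c * r / (2 * a)) hlam hθb hzl hd0
      hθlim (by positivity)
    have hdec : ∀ᵐ t, s ≤ t → fderiv ℝ V (q t) (G t) ≤ -c * V (q t) + c * r / 2 := by
      filter_upwards [hs] with t ht hst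
      refine (hdis t).trans ?_
      have h1 := mul_le_mul_of_nonneg_left (ht hst) ha.le
      have h2 : a * (c * r / (2 * a)) = c * r / 2 := by field_simp
      linarith
    have hlim : Tendsto (fun T => c * r / 2 / c + Real.exp (-c * (T - s)) *
        (V (q s) - c * r / 2 / c)) atTop (𝓝 (c * r / 2 / c + 0 *
        (V (q s) - c * r / 2 / c))) := by
      refine tendsto_const_nhds.add (Tendsto.mul_const _ ?_)
      refine Real.tendsto_exp_atBot.comp ?_
      exact (tendsto_atTop_add_const_right _ _ tendsto_id).const_mul_atTop_of_neg (by linarith)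
    have hr2 : c * r / 2 / c + 0 * (V (q s) - c * r / 2 / c) < r := by
      have : c * r / 2 / c = r / 2 := by field_simp
      linarith
    filter_upwards [hlim.eventually (gt_mem_nhds hr2), eventually_ge_atTop s] with T h1 hsT
    have hT := hs0.trans hsT
    obtain ⟨hGi, hqT⟩ := hpair T hT (hint T hT)
    exact (lyapunov_decay hV hs0 hsT hGi hqT hc hdec).trans_lt h1
  exact tendsto_norm_of_tendsto_lyapunov hV.continuous hVpos hbdd hzl hW
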